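/- Let I ⊆ ℝ be a nonempty open interval, p ∈ ℝ, n ∈ ℕ∪{0}, and μ a bounded signed Borel measure on [0,1]. Define J(p) := (−∞, (p − inf I)/(sup I − inf I)) if p ≤ inf I; J(p) := ℝ if p ∈ I; and J(p) := (1 + (p − sup I)/(sup I − inf I), ∞) if p ≥ sup I (these formulas interpreted appropriately when I is unbounded, in which case J(p) = (−∞,0), ℝ, (1,∞) respectively). Then the function f := −φ_{p,n}, restricted to I, satisfies ∫_{[0,1]} f((1−t)x + t y) dμ(t) ≥ 0 for all x, y ∈ I with x < y if and only if μ_n(λ) ≤ 0 for all λ ∈ J(p). -/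

import Mathlib

open MeasureTheory Set

/-- Integral of `f` over the set `A` with respect to the (automatically bounded) signed
Borel measure `μ`, defined via the Jordan decomposition. -/
noncomputable def sInt (μ : MeasureTheory.SignedMeasure ℝ) (A : Set ℝ) (f : ℝ → ℝ) : ℝ :=
  (∫ t in A, f t ∂μ.toJordanDecomposition.posPart) -
  (∫ t in A, f t ∂μ.toJordanDecomposition.negPart)

/-- `μ_k(τ) = ∫_{[0,1]} (t-τ)^k dμ(t)` (with the convention `0^0 = 1`). -/
noncomputable def muK (μ : MeasureTheory.SignedMeasure ℝ) (k : ℕ) (τ : ℝ) : ℝ :=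
  sInt μ (Icc 0 1) (fun t => (t - τ) ^ k)

/-- `μ_k^-(τ) = ∫_{[0,τ)} (t-τ)^k dμ(t)`. -/
noncomputable def muMinus (μ : MeasureTheory.SignedMeasure ℝ) (k : ℕ) (τ : ℝ) : ℝ :=
  sInt μ (Ico 0 τ) (fun t => (t - τ) ^ k)

/-- `μ_k^+(τ) = ∫_{(τ,1]} (t-τ)^k dμ(t)`. -/
noncomputable def muPlus (μ : MeasureTheory.SignedMeasure ℝ) (k : ℕ) (τ : ℝ) : ℝ :=
  sInt μ (Ioc τ 1) (fun t => (t - τ) ^ k)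

/-- The `n`th-order divided difference of `f` at the points `x 0, …, x n`. -/
noncomputable def divDiff (f : ℝ → ℝ) (n : ℕ) (x : Fin (n + 1) → ℝ) : ℝ :=
  ∑ j : Fin (n + 1), f (x j) / ∏ i ∈ Finset.univ.erase j, (x j - x i)

/-- `f` is `n`-increasing on `I`: all `n`th-order divided differences at pairwise
distinct points of `I` are nonnegative. -/
def nIncreasingOn (f : ℝ → ℝ) (I : Set ℝ) (n : ℕ) : Prop :=
  ∀ x : Fin (n + 1) → ℝ, Function.Injective x → (∀ j, x j ∈ I) → 0 ≤ divDiff f n x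

/-- `f` is `n`-decreasing on `I` if `-f` is `n`-increasing on `I`. -/
def nDecreasingOn (f : ℝ → ℝ) (I : Set ℝ) (n : ℕ) : Prop :=
  nIncreasingOn (fun u => -f u) I n

/-- `φ⁺_{p,n}(u) = ((u-p)_+)^n` for `n ≥ 1`, and `φ⁺_{p,0}` is the characteristic
function of `(p,∞)`. -/
noncomputable def phiPlus (p : ℝ) (n : ℕ) (u : ℝ) : ℝ :=
  if n = 0 then (if p < u then 1 else 0) else (max 0 (u - p)) ^ n

/-- `φ⁻_{p,n}(u) = ((u-p)_−)^n` for `n ≥ 1`, and `φ⁻_{p,0}` is the characteristic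
function of `(−∞,p)`. -/
noncomputable def phiMinus (p : ℝ) (n : ℕ) (u : ℝ) : ℝ :=
  if n = 0 then (if u < p then 1 else 0) else (max 0 (p - u)) ^ n

/- The set `J(p)` associated with an interval `I` and a point `p ∈ ℝ`:
`(−∞, (p − inf I)/(sup I − inf I))` if `p ≤ inf I` (interpreted as `(−∞,0)` when `I` is
unbounded above), `ℝ` if `p ∈ I`, and `(1 + (p − sup I)/(sup I − inf I), ∞)` if
`p ≥ sup I` (interpreted as `(1,∞)` when `I` is unbounded below). -/
open scoped Classical in
noncomputable def Jset (I : Set ℝ) (p : ℝ) : Set ℝ :=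
  if p ∈ I then Set.univ
  else if p ∈ lowerBounds I then
    (if BddAbove I then Set.Iio ((p - sInf I) / (sSup I - sInf I)) else Set.Iio 0)
  else
    (if BddBelow I then Set.Ioi (1 + (p - sSup I) / (sSup I - sInf I)) else Set.Ioi 1)


theorem aux_ball (I : Set ℝ) (hIo : IsOpen I) (x : ℝ) (hx : x ∈ I) :
    ∃ ε > 0, ∀ z, |z - x| < ε → z ∈ I := by
  obtain ⟨ε, h0, h⟩ := Metric.isOpen_iff.1 hIo x hx
  exact ⟨ε, h0, fun z hz => h (by simpa [Real.dist_eq] using hz)⟩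

theorem aux_inf_lt (I : Set ℝ) (hIo : IsOpen I) (hb : BddBelow I) (x : ℝ) (hx : x ∈ I) :
    sInf I < x := by
  obtain ⟨ε, h0, h⟩ := aux_ball I hIo x hx
  have h1 : x - ε / 2 ∈ I := h _ (by rw [abs_lt]; constructor <;> linarith)
  have := csInf_le hb h1
  linarith

theorem aux_lt_sup (I : Set ℝ) (hIo : IsOpen I) (hb : BddAbove I) (x : ℝ) (hx : x ∈ I) :
    x < sSup I := by
  obtain ⟨ε, h0, h⟩ := aux_ball I hIo x hx
  have h1 : x + ε / 2 ∈ I := h _ (by rw [abs_lt]; constructor <;> linarith)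
  have := le_csSup hb h1
  linarith

theorem aux_Ioo (I : Set ℝ) (hIc : I.OrdConnected) (hIne : I.Nonempty)
    (x : ℝ) (h1 : sInf I < x) (h2 : x < sSup I) : x ∈ I := by
  obtain ⟨u, hu, hux⟩ := exists_lt_of_csInf_lt hIne h1
  obtain ⟨v, hv, hvx⟩ := exists_lt_of_lt_csSup hIne h2
  exact hIc.out hu hv ⟨hux.le, hvx.le⟩

theorem aux_J (I : Set ℝ) (hIo : IsOpen I) (hIc : I.OrdConnected) (hIne : I.Nonempty)
    (p lam : ℝ) :
    lam ∈ Jset I p ↔ ∃ x ∈ I, ∃ y ∈ I, x < y ∧ lam * (y - x) = p - x := by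
  obtain ⟨w, hw⟩ := hIne
  unfold Jset
  split_ifs with hp hl hb hb
  · simp only [mem_univ, true_iff]
    obtain ⟨ε, h0, h⟩ := aux_ball I hIo p hp
    obtain ⟨d, hd, hd1, hd2⟩ : ∃ d > 0, |lam| * d < ε ∧ |1 - lam| * d < ε := by
      refine ⟨ε / (|lam| + |1 - lam| + 1), by positivity, ?_, ?_⟩ <;>
      · rw [mul_div_assoc', div_lt_iff₀ (by positivity)]
        nlinarith [abs_nonneg lam, abs_nonneg (1 - lam)]
    refine ⟨p - lam * d, h _ ?_, p + (1 - lam) * d, h _ ?_, by linarith, by ring⟩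
    · rw [show p - lam * d - p = -(lam * d) by ring, abs_neg, abs_mul, abs_of_pos hd]; exact hd1
    · rw [show p + (1 - lam) * d - p = (1 - lam) * d by ring, abs_mul, abs_of_pos hd]; exact hd2
  · have hbb : BddBelow I := ⟨p, hl⟩
    have hpa : p ≤ sInf I := le_csInf ⟨w, hw⟩ hl
    have hab : sInf I < sSup I := (aux_inf_lt I hIo hbb w hw).trans (aux_lt_sup I hIo hb w hw)
    rw [mem_Iio, lt_div_iff₀ (by linarith)]
    constructor
    · intro h
      have hlam : lam < 0 := by
        by_contra hc
        push Not at hc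
        nlinarith
      obtain ⟨c, rfl⟩ : ∃ c, lam = -c := ⟨-lam, by ring⟩
      have hc : 0 < c := by linarith
      have hlt : sInf I + (sInf I - p) / c < sSup I := by
        have : (sInf I - p) / c < sSup I - sInf I := by
          rw [div_lt_iff₀ hc]; linarith
        linarith
      have hcont : ContinuousAt (fun x : ℝ => x + (x - p) / c) (sInf I) := by fun_prop
      have e1 : ∀ᶠ x in nhdsWithin (sInf I) (Ioi (sInf I)), x + (x - p) / c < sSup I :=
        (hcont.eventually_lt_const hlt).filter_mono nhdsWithin_le_nhds
      obtain ⟨x, hx1, hx2⟩ := (e1.and self_mem_nhdsWithin).exists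
      have hx2 : sInf I < x := hx2
      have hq : 0 < (x - p) / c := div_pos (by linarith) hc
      refine ⟨x, aux_Ioo I hIc ⟨w, hw⟩ x hx2 (by linarith), x + (x - p) / c,
        aux_Ioo I hIc ⟨w, hw⟩ _ (by linarith) hx1, by linarith, ?_⟩
      field_simp
      ring
    · rintro ⟨x, hx, y, hy, hxy, he⟩
      have h1 := aux_inf_lt I hIo hbb x hx
      have h2 := aux_lt_sup I hIo hb y hy
      have hlam : lam < 0 := by
        by_contra hc
        push Not at hc
        nlinarith
      nlinarith
  · rw [mem_Iio]
    have hpI : ∀ x ∈ I, p < x := fun x hx => lt_of_le_of_ne (hl hx) (fun h => hp (h ▸ hx))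
    constructor
    · intro h
      obtain ⟨c, rfl⟩ : ∃ c, lam = -c := ⟨-lam, by ring⟩
      have hc : 0 < c := by linarith
      have hq : 0 < (w - p) / c := div_pos (by linarith [hpI w hw]) hc
      obtain ⟨z, hz, hzz⟩ := not_bddAbove_iff.1 hb (w + (w - p) / c)
      refine ⟨w, hw, w + (w - p) / c, hIc.out hw hz ⟨by linarith, hzz.le⟩, by linarith, ?_⟩
      field_simp
      ring
    · rintro ⟨x, hx, y, hy, hxy, he⟩
      have := hpI x hx
      by_contra hc
      push Not at hc
      nlinarith
  all_goals
    have hpI : ∀ x ∈ I, x < p := by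
      intro x hx
      by_contra hc
      push Not at hc
      apply hl
      intro z hz
      by_contra hzc
      push Not at hzc
      exact hp (hIc.out hz hx ⟨hzc.le, hc⟩)
    have hba : BddAbove I := ⟨p, fun x hx => (hpI x hx).le⟩
  · have hpb : sSup I ≤ p := csSup_le ⟨w, hw⟩ fun x hx => (hpI x hx).le
    have hab : sInf I < sSup I := (aux_inf_lt I hIo hb w hw).trans (aux_lt_sup I hIo hba w hw)
    obtain ⟨c, rfl⟩ : ∃ c, lam = 1 + c := ⟨lam - 1, by ring⟩
    rw [mem_Ioi, add_lt_add_iff_left, div_lt_iff₀ (by linarith)]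
    constructor
    · intro h
      have hc : 0 < c := by
        by_contra hc
        push Not at hc
        nlinarith
      have hlt : sInf I < sSup I - (p - sSup I) / c := by
        have : (p - sSup I) / c < sSup I - sInf I := by
          rw [div_lt_iff₀ hc]; linarith
        linarith
      have hcont : ContinuousAt (fun y : ℝ => y - (p - y) / c) (sSup I) := by fun_prop
      have e1 : ∀ᶠ y in nhdsWithin (sSup I) (Iio (sSup I)), sInf I < y - (p - y) / c :=
        (hcont.eventually_const_lt hlt).filter_mono nhdsWithin_le_nhds
      obtain ⟨y, hy1, hy2⟩ := (e1.and self_mem_nhdsWithin).exists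
      have hy2 : y < sSup I := hy2
      have hq : 0 < (p - y) / c := div_pos (by linarith) hc
      refine ⟨y - (p - y) / c, aux_Ioo I hIc ⟨w, hw⟩ _ hy1 (by linarith), y,
        aux_Ioo I hIc ⟨w, hw⟩ _ (by linarith) hy2, by linarith, ?_⟩
      field_simp
      ring
    · rintro ⟨x, hx, y, hy, hxy, he⟩
      have h1 := aux_inf_lt I hIo hb x hx
      have h2 := aux_lt_sup I hIo hba y hy
      have hc : 0 < c := by
        by_contra hc
        push Not at hc
        nlinarith
      nlinarith
  · obtain ⟨c, rfl⟩ : ∃ c, lam = 1 + c := ⟨lam - 1, by ring⟩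
    rw [mem_Ioi]
    constructor
    · intro h
      have hc : 0 < c := by linarith
      have hq : 0 < (p - w) / c := div_pos (by linarith [hpI w hw]) hc
      obtain ⟨z, hz, hzz⟩ := not_bddBelow_iff.1 hb (w - (p - w) / c)
      refine ⟨w - (p - w) / c, hIc.out hz hw ⟨hzz.le, by linarith⟩, w, hw, by linarith, ?_⟩
      field_simp
      ring
    · rintro ⟨x, hx, y, hy, hxy, he⟩
      have := hpI y hy
      by_contra hc
      push Not at hc
      nlinarith

theorem aux_int (μ : MeasureTheory.SignedMeasure ℝ) (n : ℕ) (x y p lam : ℝ)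
    (h : lam * (y - x) = p - x) :
    sInt μ (Icc 0 1) (fun t => -(((1 - t) * x + t * y - p) ^ n))
      = -((y - x) ^ n * muK μ n lam) := by
  have : (fun t : ℝ => -(((1 - t) * x + t * y - p) ^ n))
      = fun t => (-(y - x) ^ n) * (t - lam) ^ n := by
    funext t
    rw [neg_mul, ← mul_pow]
    congr 2
    linear_combination h
  rw [this, muK, sInt, sInt, integral_const_mul, integral_const_mul]
  ring

theorem stmt5 (I : Set ℝ) (hIo : IsOpen I) (hIc : I.OrdConnected) (hIne : I.Nonempty)
    (p : ℝ) (n : ℕ) (μ : MeasureTheory.SignedMeasure ℝ) :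
    (∀ x ∈ I, ∀ y ∈ I, x < y →
        0 ≤ sInt μ (Icc 0 1) (fun t => -(((1 - t) * x + t * y - p) ^ n))) ↔
      ∀ lam ∈ Jset I p, muK μ n lam ≤ 0 := by
  constructor
  · intro h lam hlam
    obtain ⟨x, hx, y, hy, hxy, he⟩ := (aux_J I hIo hIc hIne p lam).1 hlam
    have h1 := h x hx y hy hxy
    rw [aux_int μ n x y p lam he] at h1
    have h2 : 0 < (y - x) ^ n := pow_pos (by linarith) n
    by_contra hc
    push Not at hc
    nlinarith [mul_pos h2 hc]
  · intro h x hx y hy hxy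
    have hd : y - x ≠ 0 := (sub_pos.2 hxy).ne'
    have he : (p - x) / (y - x) * (y - x) = p - x := div_mul_cancel₀ _ hd
    have h1 := h _ ((aux_J I hIo hIc hIne p _).2 ⟨x, hx, y, hy, hxy, he⟩)
    rw [aux_int μ n x y p _ he]
    have h2 : 0 < (y - x) ^ n := pow_pos (by linarith) n
    nlinarith [mul_nonneg h2.le (neg_nonneg.2 h1)]
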